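/- Let Ω⁺ = 𝕋² × (0,1) and u ∈ H³(Ω⁺; ℝ³). Then there is a constant C > 0 (independent of u) such that ‖u‖_{H³(Ω⁺)} ≤ C(∑_{|α|≤3, α tangential} ‖∂^α u‖_{L²(Ω⁺)} + ‖div u‖_{H²(Ω⁺)} + ‖curl u‖_{H²(Ω⁺)}), where tangential multi-indices α involve only ∂₁ and ∂₂ derivatives. -/

import Mathlib

open MeasureTheory Set

/-- A fundamental cell for `Ω⁺ = 𝕋² × (0,1)` (functions are `1`-periodic in `x₁, x₂`). -/
def cell : Set (Fin 3 → ℝ) :=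
  {x | x 0 ∈ Ioo (0 : ℝ) 1 ∧ x 1 ∈ Ioo (0 : ℝ) 1 ∧ x 2 ∈ Ioo (0 : ℝ) 1}

/-- The squared `H^m` norm on `Ω⁺ = 𝕋² × (0,1)`. -/
noncomputable def HmSq (m : ℕ) {F : Type*} [NormedAddCommGroup F] [NormedSpace ℝ F]
    (u : (Fin 3 → ℝ) → F) : ℝ :=
  ∑ j ∈ Finset.range (m + 1), ∫ x in cell, ‖iteratedFDeriv ℝ j u x‖ ^ 2

/-- Tangential derivative `∂ᵢ` (`i = 0,1`) of a vector field. -/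
noncomputable def Dtan (i : Fin 3) (u : (Fin 3 → ℝ) → EuclideanSpace ℝ (Fin 3)) :
    (Fin 3 → ℝ) → EuclideanSpace ℝ (Fin 3) :=
  fun x => fderiv ℝ u x (Pi.single i 1)

/-- The `L²` norms of all tangential derivatives `∂₁^a ∂₂^b u`, `a + b ≤ 3`. -/
noncomputable def tangSum (u : (Fin 3 → ℝ) → EuclideanSpace ℝ (Fin 3)) : ℝ :=
  ∑ p ∈ (Finset.range 4 ×ˢ Finset.range 4).filter (fun p => p.1 + p.2 ≤ 3),
    Real.sqrt (∫ x in cell, ‖(Dtan 0)^[p.1] ((Dtan 1)^[p.2] u) x‖ ^ 2)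

/-- Divergence of a vector field. -/
noncomputable def divg (u : (Fin 3 → ℝ) → EuclideanSpace ℝ (Fin 3)) :
    (Fin 3 → ℝ) → ℝ :=
  fun x => ∑ i : Fin 3, fderiv ℝ u x (Pi.single i 1) i

/-- Curl of a vector field. -/
noncomputable def curl3 (u : (Fin 3 → ℝ) → EuclideanSpace ℝ (Fin 3)) :
    (Fin 3 → ℝ) → EuclideanSpace ℝ (Fin 3) :=
  fun x => (WithLp.equiv 2 (Fin 3 → ℝ)).symm
    ![fderiv ℝ (fun y => u y 2) x (Pi.single 1 1) - fderiv ℝ (fun y => u y 1) x (Pi.single 2 1),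
      fderiv ℝ (fun y => u y 0) x (Pi.single 2 1) - fderiv ℝ (fun y => u y 2) x (Pi.single 0 1),
      fderiv ℝ (fun y => u y 1) x (Pi.single 0 1) - fderiv ℝ (fun y => u y 0) x (Pi.single 1 1)]

/-!
A constant-coefficient operator `G = ∑ k, M k ∂ₖ` for which `M 2` has a left inverse `R` is
non-characteristic in the direction `e₂`: `∂₂ v = R (G v) - ∑ k ≠ 2, R (M k (∂ₖ v))`. As `G`
commutes with `∂₀` and `∂₁`, this formula can be fed into itself, so each derivative of `v` is
bounded pointwise by the tangential derivatives of `v` and the derivatives of `G v`. For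
`G = (div, curl)` one has `M k a = (aₖ, eₖ × a)`, and `aₖ eₖ - eₖ × (eₖ × a) = a` exhibits the left
inverse. Integrating the pointwise bound uses only the triangle inequality in `L²`; no boundary
term or integration by parts occurs.
-/

section PartialDeriv

theorem norm_smulRightL_proj_le_one {ι E : Type*} [Fintype ι] [NormedAddCommGroup E]
    [NormedSpace ℝ E] (i : ι) :
    ‖ContinuousLinearMap.smulRightL ℝ (ι → ℝ) E (ContinuousLinearMap.proj i)‖ ≤ 1 := by
  refine ContinuousLinearMap.opNorm_le_bound _ zero_le_one fun e => ?_
  refine ContinuousLinearMap.opNorm_le_bound _ (by positivity) fun y => ?_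
  calc ‖y i • e‖ = ‖y i‖ * ‖e‖ := norm_smul _ _
    _ ≤ ‖y‖ * ‖e‖ := by gcongr; exact norm_le_pi_norm y i
    _ = 1 * ‖e‖ * ‖y‖ := by ring

variable {ι E : Type*} [DecidableEq ι] [NormedAddCommGroup E] [NormedSpace ℝ E]

/-- The partial derivative `∂ᵢ f`, for vector-valued `f`; as for `fderiv`, the value is `0`
where `f` is not differentiable. -/
noncomputable def partialDeriv (i : ι) (f : (ι → ℝ) → E) : (ι → ℝ) → E :=
  fun x => fderiv ℝ f x (Pi.single i 1)

theorem partialDeriv_clm_comp [Finite ι] {F : Type*} [NormedAddCommGroup F] [NormedSpace ℝ F]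
    {f : (ι → ℝ) → E} (L : E →L[ℝ] F) (hf : Differentiable ℝ f) (i : ι) :
    partialDeriv i (L ∘ f) = L ∘ partialDeriv i f := by
  have := Fintype.ofFinite ι
  funext x
  simp only [partialDeriv, Function.comp_apply]
  rw [(L.hasFDerivAt.comp x (hf x).hasFDerivAt).fderiv]
  rfl

variable [Fintype ι] {f : (ι → ℝ) → E} {n : ℕ}

theorem contDiff_partialDeriv (hf : ContDiff ℝ (n + 1 : ℕ) f) (i : ι) :
    ContDiff ℝ n (partialDeriv i f) :=
  (hf.fderiv_right (m := n) (by norm_cast)).clm_apply contDiff_const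

theorem contDiff_iterate_partialDeriv (i : ι) {a : ℕ} (hf : ContDiff ℝ (n + a : ℕ) f) :
    ContDiff ℝ n ((partialDeriv i)^[a] f) := by
  induction a generalizing f with
  | zero => exact hf
  | succ a ih => exact ih (contDiff_partialDeriv hf i)

theorem partialDeriv_partialDeriv_apply (hf : ContDiff ℝ 2 f) (i j : ι) (x : ι → ℝ) :
    partialDeriv i (partialDeriv j f) x =
      fderiv ℝ (fderiv ℝ f) x (Pi.single i 1) (Pi.single j 1) := by
  have hf' : Differentiable ℝ (fderiv ℝ f) :=
    (hf.fderiv_right (m := 1) (by norm_num)).differentiable one_ne_zero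
  exact congrFun
    (partialDeriv_clm_comp (ContinuousLinearMap.apply ℝ E (Pi.single j 1)) hf' i) x

theorem partialDeriv_comm (hf : ContDiff ℝ 2 f) (i j : ι) :
    partialDeriv i (partialDeriv j f) = partialDeriv j (partialDeriv i f) := by
  funext x
  rw [partialDeriv_partialDeriv_apply hf, partialDeriv_partialDeriv_apply hf]
  exact (hf.contDiffAt.isSymmSndFDerivAt (by simp)).eq _ _

theorem iterate_partialDeriv_comm {a : ℕ} (hf : ContDiff ℝ (a + 1 : ℕ) f) (i j : ι) :
    (partialDeriv i)^[a] (partialDeriv j f) = partialDeriv j ((partialDeriv i)^[a] f) := by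
  induction a generalizing f with
  | zero => rfl
  | succ a ih =>
    rw [Function.iterate_succ_apply, Function.iterate_succ_apply,
      partialDeriv_comm (hf.of_le (by norm_cast; omega)), ih (contDiff_partialDeriv hf i)]

theorem fderiv_eq_sum_smulRight_partialDeriv (f : (ι → ℝ) → E) (x : ι → ℝ) :
    fderiv ℝ f x = ∑ i, (ContinuousLinearMap.proj i : (ι → ℝ) →L[ℝ] ℝ).smulRight
      (partialDeriv i f x) := by
  ext y
  conv_lhs => rw [pi_eq_sum_univ' y, map_sum]
  simp [partialDeriv]

theorem norm_iteratedFDeriv_partialDeriv_le (hf : ContDiff ℝ (n + 1 : ℕ) f) (i : ι)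
    (x : ι → ℝ) :
    ‖iteratedFDeriv ℝ n (partialDeriv i f) x‖ ≤ ‖iteratedFDeriv ℝ (n + 1) f x‖ := by
  have hf' : ContDiff ℝ n (fderiv ℝ f) := hf.fderiv_right (by norm_cast)
  have h := norm_iteratedFDeriv_clm_apply_const (c := (Pi.single i 1 : ι → ℝ)) (x := x)
    hf'.contDiffAt le_rfl
  rwa [Pi.norm_single, norm_one, one_mul, norm_iteratedFDeriv_fderiv] at h

theorem norm_iteratedFDeriv_succ_le_sum_partialDeriv (hf : ContDiff ℝ (n + 1 : ℕ) f)
    (x : ι → ℝ) :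
    ‖iteratedFDeriv ℝ (n + 1) f x‖ ≤ ∑ i, ‖iteratedFDeriv ℝ n (partialDeriv i f) x‖ := by
  let L (i : ι) : E →L[ℝ] ((ι → ℝ) →L[ℝ] E) :=
    ContinuousLinearMap.smulRightL ℝ (ι → ℝ) E (ContinuousLinearMap.proj i)
  have hsum : fderiv ℝ f = fun y => ∑ i, (L i ∘ partialDeriv i f) y :=
    funext (fderiv_eq_sum_smulRight_partialDeriv f)
  have hpartial (i : ι) : ContDiff ℝ n (partialDeriv i f) := contDiff_partialDeriv hf i
  rw [← norm_iteratedFDeriv_fderiv, hsum,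
    iteratedFDeriv_fun_sum_apply fun i _ => ((L i).contDiff.comp (hpartial i)).contDiffAt]
  refine (norm_sum_le _ _).trans (Finset.sum_le_sum fun i _ => ?_)
  exact ((L i).norm_iteratedFDeriv_comp_left (hpartial i).contDiffAt le_rfl).trans
    (mul_le_of_le_one_left (norm_nonneg _) (norm_smulRightL_proj_le_one i))

end PartialDeriv

section FirstOrderOp

variable {ι E F : Type*} [Fintype ι] [DecidableEq ι] [NormedAddCommGroup E] [NormedSpace ℝ E]
  [NormedAddCommGroup F] [NormedSpace ℝ F] {v : (ι → ℝ) → E} {n : ℕ}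

/-- The homogeneous first-order differential operator `v ↦ ∑ₖ Mₖ ∂ₖ v` with constant
coefficients. -/
noncomputable def firstOrderOp (M : ι → E →L[ℝ] F) (v : (ι → ℝ) → E) : (ι → ℝ) → F :=
  fun x => ∑ k, M k (partialDeriv k v x)

theorem contDiff_firstOrderOp (M : ι → E →L[ℝ] F) (hv : ContDiff ℝ (n + 1 : ℕ) v) :
    ContDiff ℝ n (firstOrderOp M v) :=
  ContDiff.sum fun k _ => (M k).contDiff.comp (contDiff_partialDeriv hv k)

theorem partialDeriv_firstOrderOp (M : ι → E →L[ℝ] F) (hv : ContDiff ℝ 2 v) (i : ι) :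
    partialDeriv i (firstOrderOp M v) = firstOrderOp M (partialDeriv i v) := by
  have hd (k : ι) : Differentiable ℝ (partialDeriv k v) :=
    (contDiff_partialDeriv (n := 1) hv k).differentiable one_ne_zero
  funext x
  calc partialDeriv i (firstOrderOp M v) x
      = ∑ k, partialDeriv i (M k ∘ partialDeriv k v) x :=
        (DFunLike.congr_fun (fderiv_fun_sum (A := fun k => M k ∘ partialDeriv k v)
          fun k _ => ((M k).differentiable.comp (hd k)) x) _).trans (sum_apply _ _ _)
    _ = firstOrderOp M (partialDeriv i v) x :=
        Finset.sum_congr rfl fun k _ => by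
          rw [partialDeriv_clm_comp (M k) (hd k), partialDeriv_comm hv, Function.comp_apply]

theorem sum_norm_iteratedFDeriv_firstOrderOp_partialDeriv_le (M : ι → E →L[ℝ] F)
    (hv : ContDiff ℝ (n + 1 : ℕ) v) (i : ι) (x : ι → ℝ) :
    ∑ j ∈ Finset.range n, ‖iteratedFDeriv ℝ j (firstOrderOp M (partialDeriv i v)) x‖ ≤
      ∑ j ∈ Finset.range (n + 1), ‖iteratedFDeriv ℝ j (firstOrderOp M v) x‖ := by
  rw [Finset.sum_range_succ']
  refine le_add_of_le_of_nonneg (Finset.sum_le_sum fun j hj => ?_) (norm_nonneg _)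
  have hjn : j + 1 ≤ n := Finset.mem_range.1 hj
  rw [← partialDeriv_firstOrderOp M (hv.of_le (by norm_cast; omega))]
  exact norm_iteratedFDeriv_partialDeriv_le
    ((contDiff_firstOrderOp M hv).of_le (by norm_cast)) i x

theorem partialDeriv_eq_sub_sum_erase {M : ι → E →L[ℝ] F} {k : ι} {R : F →L[ℝ] E}
    (hR : Function.LeftInverse R (M k)) (v : (ι → ℝ) → E) (x : ι → ℝ) :
    partialDeriv k v x = R (firstOrderOp M v x) -
      ∑ i ∈ Finset.univ.erase k, R (M i (partialDeriv i v x)) := by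
  rw [firstOrderOp, ← Finset.add_sum_erase _ _ (Finset.mem_univ k), map_add, map_sum, hR,
    add_sub_cancel_right]

theorem norm_iteratedFDeriv_partialDeriv_le_of_leftInverse {M : ι → E →L[ℝ] F} {k : ι}
    {R : F →L[ℝ] E} (hR : Function.LeftInverse R (M k)) (hv : ContDiff ℝ (n + 1 : ℕ) v)
    (x : ι → ℝ) :
    ‖iteratedFDeriv ℝ n (partialDeriv k v) x‖ ≤
      ‖R‖ * ‖iteratedFDeriv ℝ n (firstOrderOp M v) x‖ +
        ∑ i ∈ Finset.univ.erase k,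
          ‖R.comp (M i)‖ * ‖iteratedFDeriv ℝ n (partialDeriv i v) x‖ := by
  have hG : ContDiff ℝ n (firstOrderOp M v) := contDiff_firstOrderOp M hv
  have hpartial (i : ι) : ContDiff ℝ n (partialDeriv i v) := contDiff_partialDeriv hv i
  have hsolve : partialDeriv k v = R ∘ firstOrderOp M v -
      fun y => ∑ i ∈ Finset.univ.erase k, (R.comp (M i) ∘ partialDeriv i v) y :=
    funext (partialDeriv_eq_sub_sum_erase hR v)
  have hcomp (i : ι) : ContDiff ℝ n (R.comp (M i) ∘ partialDeriv i v) :=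
    (R.comp (M i)).contDiff.comp (hpartial i)
  rw [hsolve, iteratedFDeriv_sub_apply (R.contDiff.comp hG).contDiffAt
      (ContDiff.sum fun i _ => hcomp i).contDiffAt,
    iteratedFDeriv_fun_sum_apply fun i _ => (hcomp i).contDiffAt]
  refine (norm_sub_le _ _).trans (add_le_add
    (R.norm_iteratedFDeriv_comp_left hG.contDiffAt le_rfl) ?_)
  exact (norm_sum_le _ _).trans
    (Finset.sum_le_sum fun i _ =>
      (R.comp (M i)).norm_iteratedFDeriv_comp_left (hpartial i).contDiffAt le_rfl)

theorem norm_iteratedFDeriv_succ_le_of_leftInverse {M : ι → E →L[ℝ] F} {k : ι}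
    {R : F →L[ℝ] E} (hR : Function.LeftInverse R (M k)) (hv : ContDiff ℝ (n + 1 : ℕ) v)
    (x : ι → ℝ) :
    ‖iteratedFDeriv ℝ (n + 1) v x‖ ≤
      ‖R‖ * ‖iteratedFDeriv ℝ n (firstOrderOp M v) x‖ +
        ∑ i ∈ Finset.univ.erase k,
          (‖R.comp (M i)‖ + 1) * ‖iteratedFDeriv ℝ n (partialDeriv i v) x‖ := by
  calc ‖iteratedFDeriv ℝ (n + 1) v x‖
      ≤ ‖iteratedFDeriv ℝ n (partialDeriv k v) x‖ +
          ∑ i ∈ Finset.univ.erase k, ‖iteratedFDeriv ℝ n (partialDeriv i v) x‖ := by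
        rw [Finset.add_sum_erase _ (fun i => ‖iteratedFDeriv ℝ n (partialDeriv i v) x‖)
          (Finset.mem_univ k)]
        exact norm_iteratedFDeriv_succ_le_sum_partialDeriv hv x
    _ ≤ ‖R‖ * ‖iteratedFDeriv ℝ n (firstOrderOp M v) x‖ +
          ∑ i ∈ Finset.univ.erase k,
            (‖R.comp (M i)‖ + 1) * ‖iteratedFDeriv ℝ n (partialDeriv i v) x‖ := by
        simp only [add_mul, one_mul, Finset.sum_add_distrib, ← add_assoc]
        gcongr
        exact norm_iteratedFDeriv_partialDeriv_le_of_leftInverse hR hv x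

end FirstOrderOp

section Tangential

variable {E F : Type*} [NormedAddCommGroup E] [NormedSpace ℝ E] [NormedAddCommGroup F]
  [NormedSpace ℝ F] {v : (Fin 3 → ℝ) → E} {n : ℕ}

/-- The exponents `(a, b)` of the tangential derivatives `∂₀ᵃ ∂₁ᵇ` of order at most `n`. -/
def tangIndices (n : ℕ) : Finset (ℕ × ℕ) :=
  (Finset.range (n + 1) ×ˢ Finset.range (n + 1)).filter (fun p => p.1 + p.2 ≤ n)

/-- The tangential derivative `∂₀ᵃ ∂₁ᵇ v`, where `p = (a, b)`. -/
noncomputable def tangDeriv (p : ℕ × ℕ) (v : (Fin 3 → ℝ) → E) : (Fin 3 → ℝ) → E :=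
  (partialDeriv 0)^[p.1] ((partialDeriv 1)^[p.2] v)

theorem mem_tangIndices {p : ℕ × ℕ} : p ∈ tangIndices n ↔ p.1 + p.2 ≤ n := by
  simp only [tangIndices, Finset.mem_filter, Finset.mem_product, Finset.mem_range]
  omega

theorem tangIndices_mono : Monotone tangIndices :=
  fun _ _ hmn _ hp => mem_tangIndices.2 ((mem_tangIndices.1 hp).trans hmn)

theorem continuous_tangDeriv {p : ℕ × ℕ} (hp : p ∈ tangIndices n) (hv : ContDiff ℝ n v) :
    Continuous (tangDeriv p v) := by
  have hpn := mem_tangIndices.1 hp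
  have h : ContDiff ℝ (0 : ℕ) (tangDeriv p v) :=
    contDiff_iterate_partialDeriv 0 (contDiff_iterate_partialDeriv 1
      (hv.of_le (by norm_cast; omega)))
  exact h.continuous

theorem tangDeriv_partialDeriv_zero {p : ℕ × ℕ} (hv : ContDiff ℝ (p.2 + 1 : ℕ) v) :
    tangDeriv p (partialDeriv 0 v) = tangDeriv (p.1 + 1, p.2) v := by
  rw [tangDeriv, iterate_partialDeriv_comm hv]
  rfl

theorem sum_norm_tangDeriv_partialDeriv_le (hv : ContDiff ℝ (n + 1 : ℕ) v) {i : Fin 3}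
    (hi : i ≠ 2) (x : Fin 3 → ℝ) :
    ∑ p ∈ tangIndices n, ‖tangDeriv p (partialDeriv i v) x‖ ≤
      ∑ p ∈ tangIndices (n + 1), ‖tangDeriv p v x‖ := by
  obtain ⟨shift, hinj, hmem, hshift⟩ : ∃ s : ℕ × ℕ → ℕ × ℕ, s.Injective ∧
      (∀ p ∈ tangIndices n, s p ∈ tangIndices (n + 1)) ∧
      ∀ p ∈ tangIndices n, tangDeriv p (partialDeriv i v) = tangDeriv (s p) v := by
    simp only [mem_tangIndices]
    fin_cases i
    · refine ⟨Prod.map (· + 1) id, (add_left_injective 1).prodMap Function.injective_id,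
        fun p hp => ?_, fun p hp => ?_⟩
      · simp only [Prod.map_fst, Prod.map_snd, id_eq]
        omega
      · exact tangDeriv_partialDeriv_zero (hv.of_le (by norm_cast; omega))
    · refine ⟨Prod.map id (· + 1), Function.injective_id.prodMap (add_left_injective 1),
        fun p hp => ?_, fun p _ => rfl⟩
      simp only [Prod.map_fst, Prod.map_snd, id_eq]
      omega
    · exact absurd rfl hi
  calc ∑ p ∈ tangIndices n, ‖tangDeriv p (partialDeriv i v) x‖
      = ∑ p ∈ tangIndices n, ‖tangDeriv (shift p) v x‖ :=
        Finset.sum_congr rfl fun p hp => by rw [hshift p hp]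
    _ = ∑ q ∈ (tangIndices n).image shift, ‖tangDeriv q v x‖ :=
        (Finset.sum_image (f := fun q => ‖tangDeriv q v x‖) hinj.injOn).symm
    _ ≤ ∑ p ∈ tangIndices (n + 1), ‖tangDeriv p v x‖ :=
        Finset.sum_le_sum_of_subset_of_nonneg (Finset.image_subset_iff.2 hmem)
          fun _ _ _ => norm_nonneg _

theorem exists_norm_iteratedFDeriv_le {M : Fin 3 → E →L[ℝ] F} {R : F →L[ℝ] E}
    (hR : Function.LeftInverse R (M 2)) (n : ℕ) :
    ∃ K ≥ 0, ∀ v : (Fin 3 → ℝ) → E, ContDiff ℝ n v → ∀ x,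
      ‖iteratedFDeriv ℝ n v x‖ ≤ K * (∑ p ∈ tangIndices n, ‖tangDeriv p v x‖ +
        ∑ j ∈ Finset.range n, ‖iteratedFDeriv ℝ j (firstOrderOp M v) x‖) := by
  induction n with
  | zero =>
    have hzero : tangIndices 0 = {(0, 0)} := by decide
    exact ⟨1, zero_le_one, fun v _ x => by simp [hzero, tangDeriv]⟩
  | succ n ih =>
    obtain ⟨K, hK, ih⟩ := ih
    refine ⟨‖R‖ + ∑ i ∈ Finset.univ.erase 2, (‖R.comp (M i)‖ + 1) * K, by positivity,
      fun v hv x => ?_⟩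
    set B := ∑ p ∈ tangIndices (n + 1), ‖tangDeriv p v x‖ +
      ∑ j ∈ Finset.range (n + 1), ‖iteratedFDeriv ℝ j (firstOrderOp M v) x‖
    have hop : ‖iteratedFDeriv ℝ n (firstOrderOp M v) x‖ ≤ B :=
      le_add_of_nonneg_of_le (by positivity) <|
        Finset.single_le_sum (f := fun j => ‖iteratedFDeriv ℝ j (firstOrderOp M v) x‖)
          (fun _ _ => norm_nonneg _) (Finset.self_mem_range_succ n)
    have htang {i : Fin 3} (hi : i ≠ 2) :
        ‖iteratedFDeriv ℝ n (partialDeriv i v) x‖ ≤ K * B := by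
      refine (ih _ (contDiff_partialDeriv hv i) x).trans ?_
      gcongr
      exact add_le_add (sum_norm_tangDeriv_partialDeriv_le hv hi x)
        (sum_norm_iteratedFDeriv_firstOrderOp_partialDeriv_le M hv i x)
    calc ‖iteratedFDeriv ℝ (n + 1) v x‖
        ≤ ‖R‖ * ‖iteratedFDeriv ℝ n (firstOrderOp M v) x‖ +
            ∑ i ∈ Finset.univ.erase 2,
              (‖R.comp (M i)‖ + 1) * ‖iteratedFDeriv ℝ n (partialDeriv i v) x‖ :=
          norm_iteratedFDeriv_succ_le_of_leftInverse hR hv x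
      _ ≤ ‖R‖ * B + ∑ i ∈ Finset.univ.erase 2, (‖R.comp (M i)‖ + 1) * (K * B) := by
          gcongr with i hi
          exact htang (Finset.ne_of_mem_erase hi)
      _ = (‖R‖ + ∑ i ∈ Finset.univ.erase 2, (‖R.comp (M i)‖ + 1) * K) * B := by
          simp only [add_mul, Finset.sum_mul, mul_assoc]

end Tangential

section SquareIntegral

theorem cell_subset_Icc : cell ⊆ Icc 0 1 := by
  rintro x ⟨h0, h1, h2⟩
  exact ⟨Fin.forall_fin_succ.2 ⟨h0.1.le, Fin.forall_fin_two.2 ⟨h1.1.le, h2.1.le⟩⟩,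
    Fin.forall_fin_succ.2 ⟨h0.2.le, Fin.forall_fin_two.2 ⟨h1.2.le, h2.2.le⟩⟩⟩

theorem memLp_two_cell {E : Type*} [NormedAddCommGroup E] {f : (Fin 3 → ℝ) → E}
    (hf : Continuous f) : MemLp f 2 (volume.restrict cell) :=
  (memLp_two_iff_integrable_sq_norm hf.aestronglyMeasurable).2
    ((hf.norm.pow 2).integrableOn_Icc.mono_set cell_subset_Icc)

theorem lpNorm_two_eq_sqrt_integral {α E : Type*} [MeasurableSpace α] {μ : Measure α}
    [NormedAddCommGroup E] {f : α → E} (hf : AEStronglyMeasurable f μ) :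
    lpNorm f 2 μ = √(∫ x, ‖f x‖ ^ 2 ∂μ) := by
  rw [lpNorm_eq_integral_norm_rpow_toReal (by norm_num) (by norm_num) hf, Real.sqrt_eq_rpow]
  norm_num

theorem lpNorm_sum_norm_le {α κ : Type*} [MeasurableSpace α] {μ : Measure α} {p : ENNReal}
    (hp : 1 ≤ p) {s : Finset κ} {G : κ → Type*} [∀ i, NormedAddCommGroup (G i)] {g : ∀ i, α → G i}
    (hg : ∀ i ∈ s, MemLp (g i) p μ) :
    lpNorm (∑ i ∈ s, fun x => ‖g i x‖) p μ ≤ ∑ i ∈ s, lpNorm (g i) p μ :=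
  (lpNorm_sum_le (fun i hi => (hg i hi).norm) hp).trans_eq
    (Finset.sum_congr rfl fun i hi => lpNorm_norm (hg i hi).aestronglyMeasurable p)

variable {E F : Type*} [NormedAddCommGroup E] [NormedSpace ℝ E] [NormedAddCommGroup F]
  [NormedSpace ℝ F] {m n : ℕ}

theorem continuous_iteratedFDeriv_of_mem_range {v : (Fin 3 → ℝ) → E} (hv : ContDiff ℝ m v)
    {j : ℕ} (hj : j ∈ Finset.range (m + 1)) : Continuous (iteratedFDeriv ℝ j v) :=
  hv.continuous_iteratedFDeriv (by exact_mod_cast Finset.mem_range_succ_iff.1 hj)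

theorem integrableOn_norm_iteratedFDeriv_sq {v : (Fin 3 → ℝ) → E} (hv : ContDiff ℝ m v) {j : ℕ}
    (hj : j ∈ Finset.range (m + 1)) :
    IntegrableOn (fun x => ‖iteratedFDeriv ℝ j v x‖ ^ 2) cell :=
  (memLp_two_cell (continuous_iteratedFDeriv_of_mem_range hv hj)).integrable_norm_pow two_ne_zero

theorem HmSq_nonneg (m : ℕ) (v : (Fin 3 → ℝ) → E) : 0 ≤ HmSq m v :=
  Finset.sum_nonneg fun _ _ => integral_nonneg fun _ => sq_nonneg _

theorem HmSq_eq_sum_lpNorm_sq {v : (Fin 3 → ℝ) → E} (hv : ContDiff ℝ m v) :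
    HmSq m v = ∑ j ∈ Finset.range (m + 1),
      lpNorm (iteratedFDeriv ℝ j v) 2 (volume.restrict cell) ^ 2 :=
  Finset.sum_congr rfl fun j hj => by
    rw [lpNorm_two_eq_sqrt_integral
      (continuous_iteratedFDeriv_of_mem_range hv hj).aestronglyMeasurable,
      Real.sq_sqrt (integral_nonneg fun _ => sq_nonneg _)]

theorem sqrt_HmSq_le_sum_lpNorm {v : (Fin 3 → ℝ) → E} (hv : ContDiff ℝ m v) :
    √(HmSq m v) ≤ ∑ j ∈ Finset.range (m + 1),
      lpNorm (iteratedFDeriv ℝ j v) 2 (volume.restrict cell) := by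
  rw [Real.sqrt_le_left (Finset.sum_nonneg fun _ _ => lpNorm_nonneg), HmSq_eq_sum_lpNorm_sq hv]
  exact Finset.sum_sq_le_sq_sum_of_nonneg fun _ _ => lpNorm_nonneg

theorem sum_lpNorm_le_sqrt_HmSq {v : (Fin 3 → ℝ) → E} (hv : ContDiff ℝ m v) :
    ∑ j ∈ Finset.range (m + 1), lpNorm (iteratedFDeriv ℝ j v) 2 (volume.restrict cell) ≤
      (m + 1) * √(HmSq m v) := by
  have hle : ∀ j ∈ Finset.range (m + 1),
      lpNorm (iteratedFDeriv ℝ j v) 2 (volume.restrict cell) ≤ √(HmSq m v) := by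
    intro j hj
    rw [HmSq_eq_sum_lpNorm_sq hv]
    exact Real.le_sqrt_of_sq_le (Finset.single_le_sum
      (f := fun j => lpNorm (iteratedFDeriv ℝ j v) 2 (volume.restrict cell) ^ 2)
      (fun _ _ => sq_nonneg _) hj)
  simpa using Finset.sum_le_card_nsmul _ _ _ hle

theorem HmSq_prodMk_le {f : (Fin 3 → ℝ) → E} {g : (Fin 3 → ℝ) → F} (hf : ContDiff ℝ m f)
    (hg : ContDiff ℝ m g) : HmSq m (fun x => (f x, g x)) ≤ HmSq m f + HmSq m g := by
  rw [HmSq, HmSq, HmSq, ← Finset.sum_add_distrib]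
  refine Finset.sum_le_sum fun j hj => ?_
  have hfj := integrableOn_norm_iteratedFDeriv_sq hf hj
  have hgj := integrableOn_norm_iteratedFDeriv_sq hg hj
  rw [← integral_add hfj hgj]
  refine integral_mono (integrableOn_norm_iteratedFDeriv_sq (hf.prodMk hg) hj) (hfj.add hgj)
    fun x => ?_
  have hjm : (j : WithTop ℕ∞) ≤ m := by exact_mod_cast Finset.mem_range_succ_iff.1 hj
  simp only [iteratedFDeriv_prodMk hf.contDiffAt hg.contDiffAt hjm,
    ContinuousMultilinearMap.opNorm_prod]
  rcases max_choice ‖iteratedFDeriv ℝ j f x‖ ‖iteratedFDeriv ℝ j g x‖ with h | h <;> rw [h]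
  · exact le_add_of_nonneg_right (sq_nonneg _)
  · exact le_add_of_nonneg_left (sq_nonneg _)

/-- The sum of the `L²` norms over `cell` of all tangential derivatives of order at most `n`,
extending `tangSum` to every order and every normed target space. -/
noncomputable def tangL2Sum (n : ℕ) (v : (Fin 3 → ℝ) → E) : ℝ :=
  ∑ p ∈ tangIndices n, √(∫ x in cell, ‖tangDeriv p v x‖ ^ 2)

theorem sum_lpNorm_tangDeriv_eq {v : (Fin 3 → ℝ) → E} (hv : ContDiff ℝ n v) :
    ∑ p ∈ tangIndices n, lpNorm (tangDeriv p v) 2 (volume.restrict cell) = tangL2Sum n v :=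
  Finset.sum_congr rfl fun _ hp =>
    lpNorm_two_eq_sqrt_integral (continuous_tangDeriv hp hv).aestronglyMeasurable

theorem tangSum_eq_tangL2Sum (u : (Fin 3 → ℝ) → EuclideanSpace ℝ (Fin 3)) :
    tangSum u = tangL2Sum 3 u := rfl

theorem tangL2Sum_nonneg (n : ℕ) (v : (Fin 3 → ℝ) → E) : 0 ≤ tangL2Sum n v :=
  Finset.sum_nonneg fun _ _ => Real.sqrt_nonneg _

theorem tangL2Sum_mono (v : (Fin 3 → ℝ) → E) : Monotone fun n => tangL2Sum n v :=
  fun _ _ h => Finset.sum_le_sum_of_subset_of_nonneg (tangIndices_mono h)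
    fun _ _ _ => Real.sqrt_nonneg _

theorem exists_lpNorm_iteratedFDeriv_le {M : Fin 3 → E →L[ℝ] F} {R : F →L[ℝ] E}
    (hR : Function.LeftInverse R (M 2)) (n : ℕ) :
    ∃ K ≥ 0, ∀ v : (Fin 3 → ℝ) → E, ContDiff ℝ n v →
      lpNorm (iteratedFDeriv ℝ n v) 2 (volume.restrict cell) ≤ K * (tangL2Sum n v +
        ∑ j ∈ Finset.range n,
          lpNorm (iteratedFDeriv ℝ j (firstOrderOp M v)) 2 (volume.restrict cell)) := by
  obtain ⟨K, hK, hpoint⟩ := exists_norm_iteratedFDeriv_le hR n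
  refine ⟨K, hK, fun v hv => ?_⟩
  have htang : ∀ p ∈ tangIndices n, MemLp (tangDeriv p v) 2 (volume.restrict cell) :=
    fun p hp => memLp_two_cell (continuous_tangDeriv hp hv)
  have hop : ∀ j ∈ Finset.range n,
      MemLp (iteratedFDeriv ℝ j (firstOrderOp M v)) 2 (volume.restrict cell) := by
    intro j hj
    have hjn : j + 1 ≤ n := Finset.mem_range.1 hj
    have hG : ContDiff ℝ j (firstOrderOp M v) :=
      contDiff_firstOrderOp M (hv.of_le (by exact_mod_cast hjn))
    exact memLp_two_cell (hG.continuous_iteratedFDeriv le_rfl)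
  set T : (Fin 3 → ℝ) → ℝ := ∑ p ∈ tangIndices n, fun x => ‖tangDeriv p v x‖
  set S : (Fin 3 → ℝ) → ℝ :=
    ∑ j ∈ Finset.range n, fun x => ‖iteratedFDeriv ℝ j (firstOrderOp M v) x‖
  have hT : MemLp T 2 (volume.restrict cell) := memLp_finsetSum' _ fun p hp => (htang p hp).norm
  have hS : MemLp S 2 (volume.restrict cell) := memLp_finsetSum' _ fun j hj => (hop j hj).norm
  calc lpNorm (iteratedFDeriv ℝ n v) 2 (volume.restrict cell)
      ≤ lpNorm (K • (T + S)) 2 (volume.restrict cell) :=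
        lpNorm_mono_real ((hT.add hS).const_smul K) fun x => by
          simpa [T, S] using hpoint v hv x
    _ = K * lpNorm (T + S) 2 (volume.restrict cell) := by
        rw [lpNorm_const_smul, coe_nnnorm, Real.norm_of_nonneg hK]
    _ ≤ K * (lpNorm T 2 (volume.restrict cell) + lpNorm S 2 (volume.restrict cell)) := by
        gcongr
        exact lpNorm_add_le hT one_le_two
    _ ≤ K * (tangL2Sum n v + ∑ j ∈ Finset.range n,
          lpNorm (iteratedFDeriv ℝ j (firstOrderOp M v)) 2 (volume.restrict cell)) := by
        rw [← sum_lpNorm_tangDeriv_eq hv]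
        gcongr
        exacts [lpNorm_sum_norm_le one_le_two htang, lpNorm_sum_norm_le one_le_two hop]

theorem exists_sqrt_HmSq_succ_le {M : Fin 3 → E →L[ℝ] F} {R : F →L[ℝ] E}
    (hR : Function.LeftInverse R (M 2)) (m : ℕ) :
    ∃ C > 0, ∀ v : (Fin 3 → ℝ) → E, ContDiff ℝ (m + 1 : ℕ) v →
      √(HmSq (m + 1) v) ≤ C * (tangL2Sum (m + 1) v + √(HmSq m (firstOrderOp M v))) := by
  choose K hK hKv using exists_lpNorm_iteratedFDeriv_le hR
  have hC : 0 ≤ ∑ j ∈ Finset.range (m + 2), K j * (m + 1) :=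
    Finset.sum_nonneg fun j _ => mul_nonneg (hK j) (by positivity)
  refine ⟨(∑ j ∈ Finset.range (m + 2), K j * (m + 1)) + 1, by linarith, fun v hv => ?_⟩
  set B := tangL2Sum (m + 1) v + √(HmSq m (firstOrderOp M v))
  have hB : 0 ≤ B := add_nonneg (tangL2Sum_nonneg _ v) (Real.sqrt_nonneg _)
  have hterm : ∀ j ∈ Finset.range (m + 2),
      lpNorm (iteratedFDeriv ℝ j v) 2 (volume.restrict cell) ≤ K j * (m + 1) * B := by
    intro j hj
    have hjm : j ≤ m + 1 := Finset.mem_range_succ_iff.1 hj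
    have hop : ∑ i ∈ Finset.range j,
        lpNorm (iteratedFDeriv ℝ i (firstOrderOp M v)) 2 (volume.restrict cell) ≤
          (m + 1) * √(HmSq m (firstOrderOp M v)) :=
      (Finset.sum_le_sum_of_subset_of_nonneg (Finset.range_mono hjm)
        fun _ _ _ => lpNorm_nonneg).trans
        (sum_lpNorm_le_sqrt_HmSq (contDiff_firstOrderOp M hv))
    have htang : tangL2Sum j v ≤ (m + 1) * tangL2Sum (m + 1) v :=
      (tangL2Sum_mono v hjm).trans
        (le_mul_of_one_le_left (tangL2Sum_nonneg _ v) (by norm_cast; omega))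
    rw [mul_assoc, mul_add]
    refine (hKv j v (hv.of_le (by exact_mod_cast hjm))).trans ?_
    exact mul_le_mul_of_nonneg_left (add_le_add htang hop) (hK j)
  calc √(HmSq (m + 1) v)
      ≤ ∑ j ∈ Finset.range (m + 2), lpNorm (iteratedFDeriv ℝ j v) 2 (volume.restrict cell) :=
        sqrt_HmSq_le_sum_lpNorm hv
    _ ≤ ∑ j ∈ Finset.range (m + 2), K j * (m + 1) * B := Finset.sum_le_sum hterm
    _ ≤ ((∑ j ∈ Finset.range (m + 2), K j * (m + 1)) + 1) * B := by
        rw [← Finset.sum_mul]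
        gcongr
        exact le_add_of_nonneg_right zero_le_one

end SquareIntegral

section DivCurl

/-- The left multiplication `b ↦ a × b` on Euclidean space. -/
noncomputable def crossLeft (a : Fin 3 → ℝ) :
    EuclideanSpace ℝ (Fin 3) →L[ℝ] EuclideanSpace ℝ (Fin 3) :=
  LinearMap.toContinuousLinearMap
    ((WithLp.linearEquiv 2 ℝ (Fin 3 → ℝ)).symm.conj (crossProduct a))

/-- The coefficients `a ↦ (aₖ, eₖ × a)` of the first-order operator `u ↦ (div u, curl u)`. -/
noncomputable def divCurlCoeff (k : Fin 3) :
    EuclideanSpace ℝ (Fin 3) →L[ℝ] ℝ × EuclideanSpace ℝ (Fin 3) :=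
  (EuclideanSpace.proj k).prod (crossLeft (Pi.single k 1))

/-- The left inverse `(d, c) ↦ d eₖ - eₖ × c` of `divCurlCoeff k`. -/
noncomputable def divCurlCoeffInv (k : Fin 3) :
    ℝ × EuclideanSpace ℝ (Fin 3) →L[ℝ] EuclideanSpace ℝ (Fin 3) :=
  (ContinuousLinearMap.toSpanSingleton ℝ (EuclideanSpace.single k 1)).coprod
    (-crossLeft (Pi.single k 1))

theorem crossLeft_apply (a : Fin 3 → ℝ) (b : EuclideanSpace ℝ (Fin 3)) :
    crossLeft a b = WithLp.toLp 2 (crossProduct a b.ofLp) := rfl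

theorem leftInverse_divCurlCoeffInv (k : Fin 3) :
    Function.LeftInverse (divCurlCoeffInv k) (divCurlCoeff k) := by
  intro a
  ext i
  fin_cases k <;> fin_cases i <;>
    simp [divCurlCoeff, divCurlCoeffInv, crossLeft_apply, cross_apply]

theorem fderiv_euclidean_apply {ι V : Type*} [Finite ι] [NormedAddCommGroup V] [NormedSpace ℝ V]
    {u : V → EuclideanSpace ℝ ι} {x : V} (hu : DifferentiableAt ℝ u x) (i : ι) (w : V) :
    fderiv ℝ (fun y => u y i) x w = fderiv ℝ u x w i := by
  have := Fintype.ofFinite ι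
  exact DFunLike.congr_fun
    ((EuclideanSpace.proj (𝕜 := ℝ) i).hasFDerivAt.comp x hu.hasFDerivAt).fderiv w

theorem firstOrderOp_divCurlCoeff {u : (Fin 3 → ℝ) → EuclideanSpace ℝ (Fin 3)}
    (hu : Differentiable ℝ u) :
    firstOrderOp divCurlCoeff u = fun x => (divg u x, curl3 u x) := by
  funext x
  refine Prod.ext ?_ ?_
  · simp [firstOrderOp, divCurlCoeff, divg, partialDeriv, Fin.sum_univ_three]
  · ext i
    simp only [firstOrderOp, divCurlCoeff, curl3, fderiv_euclidean_apply (hu x)]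
    fin_cases i <;>
      simp [Fin.sum_univ_three, crossLeft_apply, cross_apply, partialDeriv] <;> ring

theorem sqrt_HmSq_divCurl_le {m : ℕ} {u : (Fin 3 → ℝ) → EuclideanSpace ℝ (Fin 3)}
    (hu : ContDiff ℝ (m + 1 : ℕ) u) :
    √(HmSq m (firstOrderOp divCurlCoeff u)) ≤ √(HmSq m (divg u)) + √(HmSq m (curl3 u)) := by
  have hop := firstOrderOp_divCurlCoeff (hu.differentiable (by simp))
  have hpair : ContDiff ℝ m fun x => (divg u x, curl3 u x) :=
    hop ▸ contDiff_firstOrderOp divCurlCoeff hu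
  rw [hop]
  refine (Real.sqrt_le_sqrt (HmSq_prodMk_le hpair.fst hpair.snd)).trans ?_
  rw [Real.sqrt_le_left (by positivity), add_sq', Real.sq_sqrt (HmSq_nonneg _ _),
    Real.sq_sqrt (HmSq_nonneg _ _)]
  exact le_add_of_nonneg_right (by positivity)

end DivCurl

theorem div_curl_H3_estimate_general (m : ℕ) :
    ∃ C > 0, ∀ u : (Fin 3 → ℝ) → EuclideanSpace ℝ (Fin 3), ContDiff ℝ (m + 1 : ℕ) u →
      √(HmSq (m + 1) u) ≤
        C * (tangL2Sum (m + 1) u + √(HmSq m (divg u)) + √(HmSq m (curl3 u))) := by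
  obtain ⟨C, hC, hCu⟩ := exists_sqrt_HmSq_succ_le (leftInverse_divCurlCoeffInv 2) m
  refine ⟨C, hC, fun u hu => (hCu u hu).trans ?_⟩
  rw [add_assoc]
  gcongr
  exact sqrt_HmSq_divCurl_le hu

/-- Div-curl estimate on `Ω⁺ = 𝕋² × (0,1)`: the `H³` norm of `u` is controlled, with a
constant independent of `u`, by the `L²` norms of its tangential derivatives of order `≤ 3`
together with the `H²` norms of its divergence and of its curl. -/
theorem div_curl_H3_estimate :
    ∃ C > 0, ∀ u : (Fin 3 → ℝ) → EuclideanSpace ℝ (Fin 3),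
      ContDiff ℝ 3 u →
      (∀ x : Fin 3 → ℝ, u (x + Pi.single 0 1) = u x ∧ u (x + Pi.single 1 1) = u x) →
      Real.sqrt (HmSq 3 u) ≤
        C * (tangSum u + Real.sqrt (HmSq 2 (divg u)) + Real.sqrt (HmSq 2 (curl3 u))) := by
  obtain ⟨C, hC, hCu⟩ := div_curl_H3_estimate_general 2
  exact ⟨C, hC, fun u hu _ => tangSum_eq_tangL2Sum u ▸ hCu u hu⟩
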